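/- arXiv:0911.5402 — 3 statements merged into one kernel-verified Lean document; each statement's English description precedes it below -/
import Mathlib

section
/- Let (H, μ, Δ, α) be a Hom-bialgebra over a commutative ring k. Then for each integer n ≥ 0, the quadruple H^n = (H, μ^(n), Δ^(n), α^(2^n)), where μ^(n) = α^(2^n − 1) ∘ μ and Δ^(n) = Δ ∘ α^(2^n − 1), is again a Hom-bialgebra; in particular Δ^(n) ∘ μ^(n) = (μ^(n) ⊗ μ^(n)) ∘ (Id ⊗ τ ⊗ Id) ∘ (Δ^(n) ⊗ Δ^(n)). -/
/-!
Let `β` be a linear self-map commuting with `α`, `μ` and `Δ`. Then twisting by `β`, i.e. passing to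
`(β ∘ μ, Δ ∘ β, β ∘ α)`, preserves Hom-bialgebras (`IsHomBialgebra.twist`): in each axiom
all occurrences of `β` can be moved past the structure maps, and both sides of the twisted axiom
become the two sides of the original one composed with `β ∘ β`. The powers of `α` have these
commutation properties, and `β = α ^ (2 ^ n - 1)` gives `β ∘ α = α ^ (2 ^ n)`, so no induction
on `n` is needed.
-/


open TensorProduct LinearMap

variable {k : Type*} [CommRing k]

/-- `(A, μ, α)` is a Hom-associative algebra: `α` is multiplicative with respect to the
k-bilinear multiplication `μ`, and `μ` is Hom-associative. -/
def IsHomAssoc {A : Type*} [AddCommGroup A] [Module k A]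
    (μ : A →ₗ[k] A →ₗ[k] A) (α : A →ₗ[k] A) : Prop :=
  (∀ x y, α (μ x y) = μ (α x) (α y)) ∧
  (∀ x y z, μ (α x) (μ y z) = μ (μ x y) (α z))

/-- `(C, Δ, α)` is a Hom-coassociative coalgebra: `(α ⊗ α) ∘ Δ = Δ ∘ α` and
`(α ⊗ Δ) ∘ Δ = (Δ ⊗ α) ∘ Δ` (up to the associator of the tensor product). -/
def IsHomCoassoc {C : Type*} [AddCommGroup C] [Module k C]
    (Δ : C →ₗ[k] C ⊗[k] C) (α : C →ₗ[k] C) : Prop :=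
  (TensorProduct.map α α ∘ₗ Δ = Δ ∘ₗ α) ∧
  (TensorProduct.map α Δ ∘ₗ Δ =
    (TensorProduct.assoc k C C C).toLinearMap ∘ₗ (TensorProduct.map Δ α ∘ₗ Δ))

/-- `(H, μ, Δ, α)` is a Hom-bialgebra: a Hom-associative algebra and a Hom-coassociative
coalgebra such that `Δ ∘ μ = (μ ⊗ μ) ∘ (Id ⊗ τ ⊗ Id) ∘ (Δ ⊗ Δ)`, stated elementwise as
`Δ (μ x y) = map₂ μ μ (Δ x) (Δ y)`. -/
def IsHomBialgebra {H : Type*} [AddCommGroup H] [Module k H]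
    (μ : H →ₗ[k] H →ₗ[k] H) (Δ : H →ₗ[k] H ⊗[k] H) (α : H →ₗ[k] H) : Prop :=
  IsHomAssoc μ α ∧ IsHomCoassoc Δ α ∧
  ∀ x y, Δ (μ x y) = TensorProduct.map₂ μ μ (Δ x) (Δ y)

theorem map_mul_pow {A : Type*} [AddCommGroup A] [Module k A]
    {μ : A →ₗ[k] A →ₗ[k] A} {α : A →ₗ[k] A} (h : ∀ x y, α (μ x y) = μ (α x) (α y))
    (m : ℕ) (x y : A) : (α ^ m) (μ x y) = μ ((α ^ m) x) ((α ^ m) y) := by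
  induction m with
  | zero => simp
  | succ m ih => rw [pow_succ', Module.End.mul_apply, ih, h]; rfl

theorem map_comul_pow {C : Type*} [AddCommGroup C] [Module k C]
    {Δ : C →ₗ[k] C ⊗[k] C} {α : C →ₗ[k] C} (h : TensorProduct.map α α ∘ₗ Δ = Δ ∘ₗ α)
    (m : ℕ) : TensorProduct.map (α ^ m) (α ^ m) ∘ₗ Δ = Δ ∘ₗ (α ^ m) := by
  induction m with
  | zero => simp [Module.End.one_eq_id]
  | succ m ih =>
    rw [pow_succ', Module.End.mul_eq_comp, TensorProduct.map_comp, LinearMap.comp_assoc, ih,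
      ← LinearMap.comp_assoc, h, LinearMap.comp_assoc]

theorem map₂_compr₂ {H : Type*} [AddCommGroup H] [Module k H]
    (μ : H →ₗ[k] H →ₗ[k] H) (β : H →ₗ[k] H) (s t : H ⊗[k] H) :
    TensorProduct.map₂ (μ.compr₂ β) (μ.compr₂ β) s t =
      TensorProduct.map β β (TensorProduct.map₂ μ μ s t) := by
  induction s with
  | zero => simp
  | add s₁ s₂ h₁ h₂ => simp only [map_add, LinearMap.add_apply, h₁, h₂]
  | tmul a b =>
    induction t with
    | zero => simp
    | add t₁ t₂ h₁ h₂ => simp only [map_add, h₁, h₂]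
    | tmul c d => simp [TensorProduct.map₂_apply_tmul]

/-- Twisting a Hom-bialgebra by a self-map commuting with all the structure maps yields a
Hom-bialgebra. -/
theorem IsHomBialgebra.twist {H : Type*} [AddCommGroup H] [Module k H]
    {μ : H →ₗ[k] H →ₗ[k] H} {Δ : H →ₗ[k] H ⊗[k] H} {α β : H →ₗ[k] H}
    (h : IsHomBialgebra μ Δ α) (hc : α ∘ₗ β = β ∘ₗ α)
    (hμ : ∀ x y, β (μ x y) = μ (β x) (β y))
    (hΔ : TensorProduct.map β β ∘ₗ Δ = Δ ∘ₗ β) :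
    IsHomBialgebra (μ.compr₂ β) (Δ ∘ₗ β) (β ∘ₗ α) := by
  obtain ⟨⟨hm, ha⟩, ⟨hcm, hca⟩, hb⟩ := h
  have hc' (x : H) : α (β x) = β (α x) := LinearMap.congr_fun hc x
  have hΔ' (x : H) : TensorProduct.map β β (Δ x) = Δ (β x) := LinearMap.congr_fun hΔ x
  refine ⟨⟨fun x y => ?_, fun x y z => ?_⟩, ⟨?_, ?_⟩, fun x y => ?_⟩
  · simp only [LinearMap.compr₂_apply, LinearMap.comp_apply, hc', hm, hμ]
  · simp only [LinearMap.compr₂_apply, LinearMap.comp_apply]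
    rw [← hμ, ← hμ, ha]
  · rw [TensorProduct.map_comp, LinearMap.comp_assoc, ← LinearMap.comp_assoc β, hcm,
      LinearMap.comp_assoc, ← LinearMap.comp_assoc, hΔ, hc, LinearMap.comp_assoc]
  · rw [← hc, TensorProduct.map_comp, TensorProduct.map_comp]
    ext x
    have hx := LinearMap.congr_fun hca (β (β x))
    simp only [LinearMap.comp_apply] at hx ⊢
    rw [hΔ', hx]
  · simp only [LinearMap.comp_apply, map₂_compr₂, ← hb, hΔ', LinearMap.compr₂_apply, hμ]

/-- If `(H, μ, Δ, α)` is a Hom-bialgebra, then for each `n ≥ 0` the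
`n`-th derived quadruple `Hⁿ = (H, μ⁽ⁿ⁾ = α^(2ⁿ−1) ∘ μ, Δ⁽ⁿ⁾ = Δ ∘ α^(2ⁿ−1), α^(2ⁿ))`
is a Hom-bialgebra. -/
theorem derived_homBialgebra {H : Type*} [AddCommGroup H] [Module k H]
    (μ : H →ₗ[k] H →ₗ[k] H) (Δ : H →ₗ[k] H ⊗[k] H) (α : H →ₗ[k] H)
    (h : IsHomBialgebra μ Δ α) :
    ∀ n : ℕ, IsHomBialgebra (μ.compr₂ (α ^ (2 ^ n - 1))) (Δ ∘ₗ (α ^ (2 ^ n - 1)))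
      (α ^ (2 ^ n)) := by
  intro n
  have e : α ^ (2 ^ n) = (α ^ (2 ^ n - 1)) ∘ₗ α := by
    rw [← Module.End.mul_eq_comp, ← pow_succ, Nat.sub_add_cancel Nat.one_le_two_pow]
  rw [e]
  exact h.twist (Commute.self_pow α _).eq (map_mul_pow h.1.1 _) (map_comul_pow h.2.1.1 _)
end

section
/- Let (H, μ, Δ, α, c, R) be a quasi-triangular Hom-bialgebra over a commutative ring k with α surjective. Then for all integers n, k ≥ 0, H^{n,k} = (H, μ^(n), Δ^(n), α^(2^n), c, R^{α^k}), where μ^(n) = α^(2^n − 1) ∘ μ, Δ^(n) = Δ ∘ α^(2^n − 1), and R^{α^k} = (α^k ⊗ α^k)(R), is again a quasi-triangular Hom-bialgebra. -/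
/-!
Write `N = 2 ^ n`, `γ = α ^ (N - 1)` and `δ = α ^ m`. All that matters about `γ` and `δ` is that they
are endomorphisms of the Hom-bialgebra (`IsHomEndo`) and that `δ` is surjective, so the result is
proved as a twisting principle (`IsQuasiTriangular.twist`): replacing `(μ, Δ, α, R)` by
`(γ ∘ μ, Δ ∘ γ, α ∘ γ, (δ ⊗ δ) R)` preserves quasi-triangularity. The Hom-bialgebra axioms follow by
pulling all copies of `γ` out of both sides.

For the two axioms on `R = ∑ s ⊗ t`, the weak unit turns each product with `c` into `α`:
`R₁₃ R₂₃ = ∑ α s ⊗ α s' ⊗ t t'`. Since `δ` commutes with `α` and `μ`, this expression is natural in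
`R` even though `c` need not be fixed by `δ` (`mul3_R13_R23_twist`, `mul3_R13_R12_twist`).

Surjectivity is used for the last axiom only: it compares `Δᵒᵖ (γ x)` with `(δ ⊗ δ) R`, and writing
`γ x = δ y` makes both sides the image under `(γ ∘ δ) ⊗ (γ ∘ δ)` of the original axiom at `y`.
-/

open TensorProduct LinearMap

variable {k : Type*} [CommRing k]

/-- `c` is a weak unit of `(H, μ, α)`: `α x = c x = x c` for all `x`. -/
def IsWeakUnit {H : Type*} [AddCommGroup H] [Module k H]
    (μ : H →ₗ[k] H →ₗ[k] H) (α : H →ₗ[k] H) (c : H) : Prop :=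
  ∀ x, α x = μ c x ∧ α x = μ x c

/-- `R₁₂ = R ⊗ c` in `H^⊗3` (grouped as `(H ⊗ H) ⊗ H`). -/
noncomputable def R12 {H : Type*} [AddCommGroup H] [Module k H]
    (R : H ⊗[k] H) (c : H) : (H ⊗[k] H) ⊗[k] H := R ⊗ₜ[k] c

/-- `R₂₃ = c ⊗ R` in `H^⊗3`. -/
noncomputable def R23 {H : Type*} [AddCommGroup H] [Module k H]
    (R : H ⊗[k] H) (c : H) : (H ⊗[k] H) ⊗[k] H :=
  (TensorProduct.assoc k H H H).symm (c ⊗ₜ[k] R)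

/-- `R₁₃ = (τ ⊗ Id)(R₂₃)` in `H^⊗3`. -/
noncomputable def R13 {H : Type*} [AddCommGroup H] [Module k H]
    (R : H ⊗[k] H) (c : H) : (H ⊗[k] H) ⊗[k] H :=
  TensorProduct.map (TensorProduct.comm k H H).toLinearMap LinearMap.id (R23 R c)

/-- Componentwise multiplication on `H^⊗3` induced by `μ`. -/
noncomputable def mul3 {H : Type*} [AddCommGroup H] [Module k H] (μ : H →ₗ[k] H →ₗ[k] H) :
    ((H ⊗[k] H) ⊗[k] H) →ₗ[k] ((H ⊗[k] H) ⊗[k] H) →ₗ[k] (H ⊗[k] H) ⊗[k] H :=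
  TensorProduct.map₂ (TensorProduct.map₂ μ μ) μ

/-- `(H, μ, Δ, α, c, R)` is a quasi-triangular Hom-bialgebra: a Hom-bialgebra with a
weak unit `c` and `R ∈ H ⊗ H` such that `(Δ ⊗ α)(R) = R₁₃R₂₃`, `(α ⊗ Δ)(R) = R₁₃R₁₂`,
and `Δᵒᵖ(x)·R = R·Δ(x)` for all `x`, products being taken componentwise via `μ`. -/
def IsQuasiTriangular {H : Type*} [AddCommGroup H] [Module k H]
    (μ : H →ₗ[k] H →ₗ[k] H) (Δ : H →ₗ[k] H ⊗[k] H)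
    (α : H →ₗ[k] H) (c : H) (R : H ⊗[k] H) : Prop :=
  IsHomBialgebra μ Δ α ∧ IsWeakUnit μ α c ∧
  TensorProduct.map Δ α R = mul3 μ (R13 R c) (R23 R c) ∧
  (TensorProduct.assoc k H H H).symm (TensorProduct.map α Δ R) = mul3 μ (R13 R c) (R12 R c) ∧
  ∀ x, TensorProduct.map₂ μ μ ((TensorProduct.comm k H H) (Δ x)) R =
    TensorProduct.map₂ μ μ R (Δ x)

section Twist

variable {H : Type*} [AddCommGroup H] [Module k H]

/-- `γ` is an endomorphism of `(H, μ, Δ, α)`: it is compatible with the multiplication, the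
comultiplication and the twisting map. Preservation of a weak unit is not required. -/
structure IsHomEndo (μ : H →ₗ[k] H →ₗ[k] H) (Δ : H →ₗ[k] H ⊗[k] H) (α γ : H →ₗ[k] H) : Prop where
  map_mul : ∀ x y, γ (μ x y) = μ (γ x) (γ y)
  comul : ∀ x, Δ (γ x) = TensorProduct.map γ γ (Δ x)
  comm : ∀ x, α (γ x) = γ (α x)

variable {μ : H →ₗ[k] H →ₗ[k] H} {Δ : H →ₗ[k] H ⊗[k] H} {α γ δ : H →ₗ[k] H} {c : H}

theorem IsHomBialgebra.isHomEndo_pow (h : IsHomBialgebra μ Δ α) (i : ℕ) :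
    IsHomEndo μ Δ α (α ^ i) := by
  obtain ⟨⟨hm, -⟩, ⟨hΔ, -⟩, -⟩ := h
  have hΔ' : ∀ x, Δ (α x) = TensorProduct.map α α (Δ x) := fun x => (LinearMap.congr_fun hΔ x).symm
  induction i with
  | zero => exact ⟨fun x y => by simp, fun x => by simp [Module.End.one_eq_id], fun x => by simp⟩
  | succ i ih =>
    refine ⟨fun x y => ?_, fun x => ?_, fun x => ?_⟩
    · simp only [pow_succ, Module.End.mul_apply, hm, ih.map_mul]
    · simp only [pow_succ, ih.comul, hΔ', Module.End.mul_eq_comp,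
        TensorProduct.map_comp, LinearMap.comp_apply]
    · simp only [pow_succ, Module.End.mul_apply, ih.comm]

theorem map₂_compr₂_apply (u v : H ⊗[k] H) :
    TensorProduct.map₂ (μ.compr₂ γ) (μ.compr₂ γ) u v =
      TensorProduct.map γ γ (TensorProduct.map₂ μ μ u v) := by
  induction u with
  | zero => simp
  | add a b ha hb => simp only [map_add, LinearMap.add_apply, ha, hb]
  | tmul a b =>
    induction v with
    | zero => simp
    | add a b ha hb => simp only [map_add, ha, hb]
    | tmul a' b' => simp

theorem map₂_map_map (hδ : ∀ x y, δ (μ x y) = μ (δ x) (δ y)) (u v : H ⊗[k] H) :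
    TensorProduct.map₂ μ μ (TensorProduct.map δ δ u) (TensorProduct.map δ δ v) =
      TensorProduct.map δ δ (TensorProduct.map₂ μ μ u v) := by
  induction u with
  | zero => simp
  | add a b ha hb => simp only [map_add, LinearMap.add_apply, ha, hb]
  | tmul a b =>
    induction v with
    | zero => simp
    | add a b ha hb => simp only [map_add, ha, hb]
    | tmul a' b' => simp [hδ]

theorem R12_add (u v : H ⊗[k] H) : R12 (u + v) c = R12 u c + R12 v c := by
  simp [R12, TensorProduct.add_tmul]

theorem R23_add (u v : H ⊗[k] H) : R23 (u + v) c = R23 u c + R23 v c := by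
  simp [R23, TensorProduct.tmul_add]

theorem R13_add (u v : H ⊗[k] H) : R13 (u + v) c = R13 u c + R13 v c := by
  simp [R13, R23_add]

/-- Naturality of `(u, v) ↦ u₁₃ v₂₃`, whose value on `(s ⊗ t, s' ⊗ t')` is `α s ⊗ α s' ⊗ t t'`. -/
theorem mul3_R13_R23_twist (hc : IsWeakUnit μ α c) (hδ : IsHomEndo μ Δ α δ) (u v : H ⊗[k] H) :
    mul3 (μ.compr₂ γ) (R13 (TensorProduct.map δ δ u) c) (R23 (TensorProduct.map δ δ v) c) =
      TensorProduct.map (TensorProduct.map (γ ∘ₗ δ) (γ ∘ₗ δ)) (γ ∘ₗ δ)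
        (mul3 μ (R13 u c) (R23 v c)) := by
  induction u with
  | zero => simp [R13, R23]
  | add a b ha hb => simp only [map_add, R13_add, LinearMap.add_apply, ha, hb]
  | tmul a b =>
    induction v with
    | zero => simp [R23]
    | add a b ha hb => simp only [map_add, R23_add, ha, hb]
    | tmul a' b' => simp [R13, R23, mul3, ← (hc _).1, ← (hc _).2, hδ.comm, hδ.map_mul]

/-- Naturality of `(u, v) ↦ u₁₃ v₁₂`, whose value on `(s ⊗ t, s' ⊗ t')` is `s s' ⊗ α t' ⊗ α t`. -/
theorem mul3_R13_R12_twist (hc : IsWeakUnit μ α c) (hδ : IsHomEndo μ Δ α δ) (u v : H ⊗[k] H) :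
    mul3 (μ.compr₂ γ) (R13 (TensorProduct.map δ δ u) c) (R12 (TensorProduct.map δ δ v) c) =
      TensorProduct.map (TensorProduct.map (γ ∘ₗ δ) (γ ∘ₗ δ)) (γ ∘ₗ δ)
        (mul3 μ (R13 u c) (R12 v c)) := by
  induction u with
  | zero => simp [R13, R23]
  | add a b ha hb => simp only [map_add, R13_add, LinearMap.add_apply, ha, hb]
  | tmul a b =>
    induction v with
    | zero => simp [R12]
    | add a b ha hb => simp only [map_add, R12_add, ha, hb]
    | tmul a' b' => simp [R13, R23, R12, mul3, ← (hc _).1, ← (hc _).2, hδ.comm, hδ.map_mul]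

theorem map_comul_map (hδ : IsHomEndo μ Δ α δ) (u : H ⊗[k] H) :
    TensorProduct.map Δ α (TensorProduct.map δ δ u) =
      TensorProduct.map (TensorProduct.map δ δ) δ (TensorProduct.map Δ α u) := by
  induction u with
  | zero => simp
  | add a b ha hb => simp only [map_add, ha, hb]
  | tmul a b => simp [hδ.comul, hδ.comm]

theorem map_map_comul (hδ : IsHomEndo μ Δ α δ) (u : H ⊗[k] H) :
    TensorProduct.map α Δ (TensorProduct.map δ δ u) =
      TensorProduct.map δ (TensorProduct.map δ δ) (TensorProduct.map α Δ u) := by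
  induction u with
  | zero => simp
  | add a b ha hb => simp only [map_add, ha, hb]
  | tmul a b => simp [hδ.comul, hδ.comm]

theorem comm_map_map (u : H ⊗[k] H) :
    TensorProduct.comm k H H (TensorProduct.map δ δ u) =
      TensorProduct.map δ δ (TensorProduct.comm k H H u) := by
  rw [TensorProduct.map_comm]

theorem IsHomBialgebra.twist_s7 (h : IsHomBialgebra μ Δ α) (hγ : IsHomEndo μ Δ α γ) :
    IsHomBialgebra (μ.compr₂ γ) (Δ ∘ₗ γ) (α ∘ₗ γ) := by
  obtain ⟨⟨hm, ha⟩, ⟨hΔ, hco⟩, hb⟩ := h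
  refine ⟨⟨fun x y => ?_, fun x y z => ?_⟩, ⟨?_, ?_⟩, fun x y => ?_⟩
  · simp [hm, hγ.map_mul, hγ.comm]
  · have := congrArg (fun w => γ (γ w)) (ha x y z)
    simpa [hγ.map_mul, hγ.comm] using this
  · ext x
    have := LinearMap.congr_fun hΔ (γ (γ x))
    simp only [LinearMap.comp_apply, TensorProduct.map_comp] at this ⊢
    rw [← hγ.comul, this, hγ.comm]
  · ext x
    have := LinearMap.congr_fun hco (γ (γ x))
    simp only [LinearMap.comp_apply, TensorProduct.map_comp] at this ⊢
    rw [← hγ.comul, this]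
  · simp only [map₂_compr₂_apply, LinearMap.comp_apply, LinearMap.compr₂_apply, ← hb, ← hγ.comul,
      ← hγ.map_mul]

/-- Twisting principle: a quasi-triangular Hom-bialgebra can be twisted by an endomorphism `γ`, while
`R` is transported along a surjective endomorphism `δ`. -/
theorem IsQuasiTriangular.twist_s7 {R : H ⊗[k] H} (h : IsQuasiTriangular μ Δ α c R)
    (hγ : IsHomEndo μ Δ α γ) (hδ : IsHomEndo μ Δ α δ) (hsurj : Function.Surjective δ) :
    IsQuasiTriangular (μ.compr₂ γ) (Δ ∘ₗ γ) (α ∘ₗ γ) c (TensorProduct.map δ δ R) := by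
  obtain ⟨hb, hc, h1, h2, h3⟩ := h
  refine ⟨hb.twist_s7 hγ, fun x => ?_, ?_, ?_, fun x => ?_⟩
  · simp [hγ.comm, ← (hc x).1, ← (hc x).2]
  · rw [mul3_R13_R23_twist hc hδ, ← h1]
    simp only [TensorProduct.map_comp, LinearMap.comp_apply, map_comul_map hγ, map_comul_map hδ]
  · rw [mul3_R13_R12_twist hc hδ, ← h2]
    simp only [TensorProduct.map_comp, LinearMap.comp_apply, map_map_comul hγ, map_map_comul hδ,
      TensorProduct.map_map_assoc_symm]
  · obtain ⟨y, hy⟩ := hsurj (γ x)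
    simp only [map₂_compr₂_apply, LinearMap.comp_apply, ← hy, hδ.comul, comm_map_map,
      map₂_map_map hδ.map_mul, h3]

end Twist

/-- If `(H, μ, Δ, α, c, R)` is a quasi-triangular Hom-bialgebra with `α`
surjective, then for all `n, m ≥ 0` the tuple
`H^{n,m} = (H, μ⁽ⁿ⁾, Δ⁽ⁿ⁾, α^(2ⁿ), c, R^{αᵐ} = (αᵐ ⊗ αᵐ)(R))` is again a
quasi-triangular Hom-bialgebra. -/
theorem derived_quasiTriangular_surjective {H : Type*} [AddCommGroup H] [Module k H]
    (μ : H →ₗ[k] H →ₗ[k] H) (Δ : H →ₗ[k] H ⊗[k] H) (α : H →ₗ[k] H)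
    (c : H) (R : H ⊗[k] H)
    (h : IsQuasiTriangular μ Δ α c R)
    (hsurj : Function.Surjective α) :
    ∀ n m : ℕ, IsQuasiTriangular (μ.compr₂ (α ^ (2 ^ n - 1))) (Δ ∘ₗ (α ^ (2 ^ n - 1)))
      (α ^ (2 ^ n)) c (TensorProduct.map (α ^ m) (α ^ m) R) := by
  intro n m
  -- The truncated subtraction is harmless since `2 ^ n ≥ 1`.
  have hN : α ^ (2 ^ n) = α ∘ₗ α ^ (2 ^ n - 1) := by
    rw [← Module.End.mul_eq_comp, ← pow_succ', Nat.sub_add_cancel Nat.one_le_two_pow]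
  have hδ : Function.Surjective (α ^ m) := by
    rw [Module.End.coe_pow]
    exact hsurj.iterate m
  rw [hN]
  exact h.twist_s7 (h.1.isHomEndo_pow _) (h.1.isHomEndo_pow m) hδ
end

section
/- Let H = (H, μ_H, Δ_H) be a bialgebra over a commutative ring k, A = (A, μ_A) an associative algebra, and ρ : H ⊗ A → A an H-module-algebra structure on A (so ρ makes A an H-module in the usual sense and x·(ab) = Σ_(x) (x₁·a)(x₂·b) for all x ∈ H, a, b ∈ A). Suppose α_H : H → H is a bialgebra morphism and α_A : A → A is an algebra morphism such that α_A ∘ ρ = ρ ∘ (α_H ⊗ α_A). Then for all integers n, k ≥ 0, the map ρ_α^{n,k} = α_A^(2^k) ∘ ρ ∘ (α_H^n ⊗ Id_A) : H ⊗ A → A gives the Hom-associative algebra A_β = (A, μ_β = β ∘ μ_A, β), with β = α_A^(2^k), the structure of a module Hom-algebra over the Hom-bialgebra H_γ = (H, μ_γ = γ ∘ μ_H, Δ_γ = Δ_H ∘ γ, γ), with γ = α_H^(2^k). -/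
/-!
Write `β = αA ^ (2 ^ m)`, `γ = αH ^ (2 ^ m)` and `f = αH ^ n`. Powers of morphisms are morphisms,
`β (x · a) = γ x · β a`, and `f` commutes with `γ`, so the Hom-module axioms reduce to the module
axiom of `ρ`. For the module Hom-algebra axiom, both sides equal
`β² (Σ (f x₁ · a) (f x₂ · b))` with `Σ x₁ ⊗ x₂ = Δ (γ x)`: on the left one `β` is pulled out
through `β (x · a) = γ x · β a` (which absorbs one of the two `γ`'s) and the module-algebra axiom
is applied to `f (γ x)`; on the right `β` is multiplicative (`lift_twistAction`).
-/

open TensorProduct LinearMap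

variable {k : Type*} [CommRing k]

/-- `(M, αM, ρ)` is a module over the Hom-associative algebra `(A, μ, αA)`:
`αM (a·m) = αA a · αM m` and `αA a · (b·m) = (ab) · αM m`. -/
def IsHomModule {A M : Type*} [AddCommGroup A] [Module k A] [AddCommGroup M] [Module k M]
    (μ : A →ₗ[k] A →ₗ[k] A) (αA : A →ₗ[k] A) (αM : M →ₗ[k] M)
    (ρ : A →ₗ[k] M →ₗ[k] M) : Prop :=
  (∀ a m, αM (ρ a m) = ρ (αA a) (αM m)) ∧
  (∀ a b m, ρ (αA a) (ρ b m) = ρ (μ a b) (αM m))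

/-- The twisted structure map `(a, m) ↦ g (ρ (f a) m)`. -/
def twistAction {A M : Type*} [AddCommGroup A] [Module k A] [AddCommGroup M] [Module k M]
    (ρ : A →ₗ[k] M →ₗ[k] M) (f : A →ₗ[k] A) (g : M →ₗ[k] M) : A →ₗ[k] M →ₗ[k] M :=
  (LinearMap.llcomp k M M M g ∘ₗ ρ) ∘ₗ f

/-- An `H`-module Hom-algebra structure on the Hom-associative algebra `(A, μA, αA)`:
an `H`-module structure `ρ` satisfying the module Hom-algebra axiom
`αH²(x)·(ab) = Σ (x₁·a)(x₂·b)`. -/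
def IsModuleHomAlgebra {H A : Type*} [AddCommGroup H] [Module k H]
    [AddCommGroup A] [Module k A]
    (μH : H →ₗ[k] H →ₗ[k] H) (Δ : H →ₗ[k] H ⊗[k] H) (αH : H →ₗ[k] H)
    (μA : A →ₗ[k] A →ₗ[k] A) (αA : A →ₗ[k] A)
    (ρ : H →ₗ[k] A →ₗ[k] A) : Prop :=
  IsHomModule μH αH αA ρ ∧
  ∀ (x : H) (a b : A), ρ (αH (αH x)) (μA a b) =
    TensorProduct.lift μA (TensorProduct.map₂ ρ ρ (Δ x) (a ⊗ₜ[k] b))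

section TwistHelpers

variable {H A : Type*} [AddCommGroup H] [Module k H] [AddCommGroup A] [Module k A]

lemma pow_map_mul {μ : A →ₗ[k] A →ₗ[k] A} {α : A →ₗ[k] A}
    (h : ∀ x y, α (μ x y) = μ (α x) (α y)) (n : ℕ) (x y : A) :
    (α ^ n) (μ x y) = μ ((α ^ n) x) ((α ^ n) y) := by
  induction n with
  | zero => simp
  | succ n ih => simp only [pow_succ', Module.End.mul_apply, ih, h]

lemma pow_map_action {ρ : H →ₗ[k] A →ₗ[k] A} {αH : H →ₗ[k] H} {αA : A →ₗ[k] A}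
    (h : ∀ x a, αA (ρ x a) = ρ (αH x) (αA a)) (n : ℕ) (x : H) (a : A) :
    (αA ^ n) (ρ x a) = ρ ((αH ^ n) x) ((αA ^ n) a) := by
  induction n with
  | zero => simp
  | succ n ih => simp only [pow_succ', Module.End.mul_apply, ih, h]

lemma pow_map_comul {Δ : H →ₗ[k] H ⊗[k] H} {α : H →ₗ[k] H}
    (h : TensorProduct.map α α ∘ₗ Δ = Δ ∘ₗ α) (n : ℕ) (x : H) :
    TensorProduct.map (α ^ n) (α ^ n) (Δ x) = Δ ((α ^ n) x) := by
  induction n generalizing x with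
  | zero => simp
  | succ n ih =>
    have hx : TensorProduct.map α α (Δ x) = Δ (α x) := LinearMap.congr_fun h x
    rw [pow_succ, TensorProduct.map_mul, Module.End.mul_apply, Module.End.mul_apply, hx, ih]

/-- With `t = Σ x₁ ⊗ x₂`, the sum `Σ (x₁·a)(x₂·b)` computed with the twisted action and the
twisted product is `β² (Σ (f x₁ · a)(f x₂ · b))` computed with the original ones. -/
lemma lift_twistAction (ρ : H →ₗ[k] A →ₗ[k] A) {μ : A →ₗ[k] A →ₗ[k] A} (f : H →ₗ[k] H)
    {β : A →ₗ[k] A} (hβ : ∀ x y, β (μ x y) = μ (β x) (β y)) (t : H ⊗[k] H) (a b : A) :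
    TensorProduct.lift (μ.compr₂ β)
        (TensorProduct.map₂ (twistAction ρ f β) (twistAction ρ f β) t (a ⊗ₜ[k] b)) =
      β (β (TensorProduct.lift μ
        (TensorProduct.map₂ ρ ρ (TensorProduct.map f f t) (a ⊗ₜ[k] b)))) := by
  induction t with
  | zero => simp
  | tmul x y => simp [twistAction, hβ]
  | add s t hs ht => simp only [map_add, LinearMap.add_apply, hs, ht]

end TwistHelpers

/-- Let `(H, μH, Δ)` be a bialgebra, `(A, μA)` an associative algebra,
and `ρ` an `H`-module-algebra structure on `A`.  Let `αH` be a bialgebra morphism and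
`αA` an algebra morphism with `αA ∘ ρ = ρ ∘ (αH ⊗ αA)`.  Then for all `n, m ≥ 0` the map
`ρ_α^{n,m} = αA^(2ᵐ) ∘ ρ ∘ (αHⁿ ⊗ Id)` gives the Hom-associative algebra
`A_β = (A, β ∘ μA, β)`, `β = αA^(2ᵐ)`, the structure of a module Hom-algebra over the
Hom-bialgebra `H_γ = (H, γ ∘ μH, Δ ∘ γ, γ)`, `γ = αH^(2ᵐ)`. -/
theorem twist_moduleHomAlgebra {H A : Type*} [AddCommGroup H] [Module k H]
    [AddCommGroup A] [Module k A]
    (μH : H →ₗ[k] H →ₗ[k] H) (Δ : H →ₗ[k] H ⊗[k] H)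
    (hassocH : ∀ x y z : H, μH (μH x y) z = μH x (μH y z))
    (hcoassoc : TensorProduct.map LinearMap.id Δ ∘ₗ Δ =
      (TensorProduct.assoc k H H H).toLinearMap ∘ₗ (TensorProduct.map Δ LinearMap.id ∘ₗ Δ))
    (hcompatH : ∀ x y : H, Δ (μH x y) = TensorProduct.map₂ μH μH (Δ x) (Δ y))
    (μA : A →ₗ[k] A →ₗ[k] A)
    (hassocA : ∀ x y z : A, μA (μA x y) z = μA x (μA y z))
    (ρ : H →ₗ[k] A →ₗ[k] A)
    (hmod : ∀ (x y : H) (a : A), ρ x (ρ y a) = ρ (μH x y) a)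
    (hma : ∀ (x : H) (a b : A), ρ x (μA a b) =
      TensorProduct.lift μA (TensorProduct.map₂ ρ ρ (Δ x) (a ⊗ₜ[k] b)))
    (αH : H →ₗ[k] H)
    (hαHμ : ∀ x y : H, αH (μH x y) = μH (αH x) (αH y))
    (hαHΔ : TensorProduct.map αH αH ∘ₗ Δ = Δ ∘ₗ αH)
    (αA : A →ₗ[k] A)
    (hαA : ∀ x y : A, αA (μA x y) = μA (αA x) (αA y))
    (hcompat : ∀ (x : H) (a : A), αA (ρ x a) = ρ (αH x) (αA a)) :
    ∀ n m : ℕ, IsModuleHomAlgebra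
      (μH.compr₂ (αH ^ (2 ^ m))) (Δ ∘ₗ (αH ^ (2 ^ m))) (αH ^ (2 ^ m))
      (μA.compr₂ (αA ^ (2 ^ m))) (αA ^ (2 ^ m))
      (twistAction ρ (αH ^ n) (αA ^ (2 ^ m))) := by
  intro n m
  have hβμ := pow_map_mul hαA (2 ^ m)
  have hγμ := pow_map_mul hαHμ (2 ^ m)
  have hfμ := pow_map_mul hαHμ n
  have hβρ := pow_map_action hcompat (2 ^ m)
  have hfΔ := pow_map_comul hαHΔ n
  have hfγ : ∀ x, (αH ^ n) ((αH ^ (2 ^ m)) x) = (αH ^ (2 ^ m)) ((αH ^ n) x) := fun x => by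
    rw [← Module.End.mul_apply, ← Module.End.mul_apply, pow_mul_comm]
  have htw : ∀ x a, twistAction ρ (αH ^ n) (αA ^ (2 ^ m)) x a =
      (αA ^ (2 ^ m)) (ρ ((αH ^ n) x) a) := fun _ _ => rfl
  refine ⟨⟨fun x a => ?_, fun x y a => ?_⟩, fun x a b => ?_⟩
  · rw [htw, htw, hβρ ((αH ^ n) x) a, hfγ]
  · rw [htw, htw, htw, hβρ ((αH ^ n) y) a, hmod, LinearMap.compr₂_apply, hγμ, hfμ, hfγ y]
  · rw [lift_twistAction ρ (αH ^ n) hβμ, LinearMap.comp_apply, hfΔ, ← hma, htw,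
      LinearMap.compr₂_apply, hfγ, ← hβρ]
end
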